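/- Let X_R and X be real vector spaces, Y a type, Q : X_R → X a linear map, N ∈ ℕ, P : X → (Fin N → ℝ) a linear map, and S a set of functions from X to Y. Assume: (i) every F ∈ S factors through P, i.e. there exists F̂ : (Fin N → ℝ) → Y with F = F̂ ∘ P; and (ii) for every coordinate i ∈ Fin N there exist F ∈ S and g : Y → ℝ with (P x) i = g(F(x)) for all x ∈ X. Then the set of gauge vectors of the reduced model, {y ∈ X_R : ∀ F ∈ S, ∀ r ∈ X_R, ∀ η ∈ ℝ, F(Q(r + η • y)) = F(Q(r))}, equals the kernel of the composite linear map P ∘ Q. (This is the gauge half of the paper's theorem T_R = Ker(P ∘ Q); taking Q the identity gives the complete-model statement T = Ker P.) -/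

import Mathlib

/-- The reduced gauge space equals the kernel of `P ∘ Q`: given that every experiment
factors through the observation map `P` and every coordinate of `P` is determined by
some experiment, the gauge vectors of the reduced model `(X_R, Q)` are exactly
`Ker (P ∘ Q)`. -/
theorem reduced_gauge_eq_ker {XR X Y : Type*}
    [AddCommGroup XR] [Module ℝ XR] [AddCommGroup X] [Module ℝ X]
    (Q : XR →ₗ[ℝ] X) (N : ℕ) (P : X →ₗ[ℝ] (Fin N → ℝ)) (S : Set (X → Y))
    (h1 : ∀ F ∈ S, ∃ Fhat : (Fin N → ℝ) → Y, ∀ x : X, F x = Fhat (P x))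
    (h2 : ∀ i : Fin N, ∃ F ∈ S, ∃ g : Y → ℝ, ∀ x : X, P x i = g (F x)) :
    {y : XR | ∀ F ∈ S, ∀ r : XR, ∀ η : ℝ, F (Q (r + η • y)) = F (Q r)} =
      ↑(LinearMap.ker (P ∘ₗ Q)) := by
  ext y
  simp only [Set.mem_ofPred_eq, SetLike.mem_coe, LinearMap.mem_ker, LinearMap.comp_apply]
  constructor
  · intro hy
    ext i
    obtain ⟨F, hF, g, hg⟩ := h2 i
    -- Invariance at `r = 0`, `η = 1` says that `F` cannot tell `Q y` from `0`.
    have h := hy F hF 0 1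
    rw [zero_add, one_smul, map_zero] at h
    rw [hg, h, ← hg, map_zero]
  · intro hy F hF r η
    obtain ⟨Fhat, hFhat⟩ := h1 F hF
    rw [hFhat, hFhat, map_add, map_add, map_smul, map_smul, hy, smul_zero, add_zero]
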